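/- For every n ≥ 0, the number of partitions of n into parts congruent to 1 or 4 modulo 5 equals the number of partitions of n into parts λ₁ ≥ λ₂ ≥ ... ≥ λ_t with λ_i - λ_{i+1} ≥ 2 for all i. -/

import Mathlib

namespace RR
open Finset

section Gen
variable {R : Type*} [CommRing R]

def P (q : R) (n : ℕ) : R := ∏ i ∈ range n, (1 - q ^ (i + 1))

theorem P_succ (q : R) (n : ℕ) : P q (n + 1) = P q n * (1 - q ^ (n + 1)) := prod_range_succ _ _

theorem u_succ {q : R} {u : ℕ → R} (hu : ∀ k, P q k * u k = 1) (k : ℕ) :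
    (1 - q ^ (k + 1)) * u (k + 1) = u k := by
  have h1 := hu k
  have h2 := hu (k + 1)
  rw [P_succ] at h2
  linear_combination (u k) * h2 - (1 - q ^ (k + 1)) * u (k + 1) * h1

theorem u_cancel {q : R} {u : ℕ → R} (hu : ∀ k, P q k * u k = 1) (k : ℕ) {x y : R}
    (h : (1 - q ^ (k + 1)) * x = (1 - q ^ (k + 1)) * y) : x = y := by
  have h2 := hu (k + 1)
  rw [P_succ] at h2
  linear_combination (P q k * u (k + 1)) * h - (x - y) * h2

theorem vdm {q : R} {u : ℕ → R} (hu : ∀ k, P q k * u k = 1) (M : ℕ) : ∀ a : ℕ,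
    ∑ k ∈ range (M + 1), q ^ (k * (k + a)) * (u (M - k) * u k * u (k + a)) = u M * u (M + a) := by
  have us := u_succ hu
  have h0 : u 0 = 1 := by simpa [P] using hu 0
  induction M with
  | zero => intro a; simp [h0]
  | succ M ih =>
    intro a
    apply u_cancel hu M
    have key : (1 - q ^ (M + 1)) * ∑ k ∈ range (M + 1 + 1),
        q ^ (k * (k + a)) * (u (M + 1 - k) * u k * u (k + a))
        = ∑ k ∈ range (M + 1 + 1), q ^ (k * (k + a)) *
            (((1 - q ^ (M + 1 - k)) * u (M + 1 - k)) * u k * u (k + a))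
        + ∑ k ∈ range (M + 1 + 1), q ^ (k * (k + a)) * q ^ (M + 1 - k) *
            (u (M + 1 - k) * ((1 - q ^ k) * u k) * u (k + a)) := by
      rw [mul_sum, ← sum_add_distrib]
      refine sum_congr rfl fun k hk => ?_
      have : q ^ (M + 1) = q ^ (M + 1 - k) * q ^ k := by
        rw [← pow_add]; congr 1; have := mem_range.1 hk; omega
      rw [this]; ring
    rw [key, sum_range_succ, sum_range_succ' _ (M + 1)]
    simp only [Nat.sub_self, pow_zero, sub_self, zero_mul, mul_zero, add_zero]
    have e1 : ∑ k ∈ range (M + 1), q ^ (k * (k + a)) *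
            (((1 - q ^ (M + 1 - k)) * u (M + 1 - k)) * u k * u (k + a)) = u M * u (M + a) := by
      rw [← ih a]
      refine sum_congr rfl fun k hk => ?_
      have : M + 1 - k = (M - k) + 1 := by have := mem_range.1 hk; omega
      rw [this, us]
    have e2 : ∑ k ∈ range (M + 1), q ^ ((k + 1) * (k + 1 + a)) * q ^ (M + 1 - (k + 1)) *
            (u (M + 1 - (k + 1)) * ((1 - q ^ (k + 1)) * u (k + 1)) * u (k + 1 + a))
            = q ^ (M + a + 1) * (u M * u (M + (a + 1))) := by
      rw [← ih (a + 1), mul_sum]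
      refine sum_congr rfl fun k hk => ?_
      obtain ⟨t, rfl⟩ : ∃ t, M = k + t := ⟨M - k, by have := mem_range.1 hk; omega⟩
      have h1 : k + t + 1 - (k + 1) = t := by omega
      have h2 : k + t - k = t := by omega
      rw [h1, h2, us, show k + 1 + a = k + (a + 1) by ring]
      ring
    rw [e1, e2]
    have h3 := us M
    have h4 := us (M + a)
    rw [show M + 1 + a = M + a + 1 by ring, show M + (a + 1) = M + a + 1 by ring]
    linear_combination - u M * h4 - u (M + a + 1) * h3

theorem bailey {q : R} {u : ℕ → R} (hu : ∀ k, P q k * u k = 1) (α : ℕ → R) (n : ℕ) :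
    ∑ m ∈ range (n + 1), α m * q ^ (m ^ 2) * (u (n - m) * u (n + m)) =
    ∑ r ∈ range (n + 1), q ^ (r ^ 2) * u (n - r) *
      ∑ m ∈ range (r + 1), α m * (u (r - m) * u (r + m)) := by
  simp_rw [mul_sum]
  rw [sum_comm' (s := range (n + 1)) (t := fun r => range (r + 1)) (t' := range (n + 1))
    (s' := fun m => Ico m (n + 1)) (by intro x y; simp; omega)]
  refine sum_congr rfl fun m hm => ?_
  obtain ⟨t, rfl⟩ : ∃ t, n = m + t := ⟨n - m, by have := mem_range.1 hm; omega⟩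
  rw [sum_Ico_eq_sum_range, show m + t + 1 - m = t + 1 by omega, show m + t - m = t by omega,
    show m + t + m = t + 2 * m by omega, ← vdm hu t (2 * m), mul_sum]
  refine sum_congr rfl fun k hk => ?_
  rw [show m + t - (m + k) = t - k by omega, show m + k - m = k by omega,
    show m + k + m = k + 2 * m by omega]
  ring

theorem qbinom {q : R} {u : ℕ → R} (hu : ∀ k, P q k * u k = 1) (w : R) (N : ℕ) : ∀ z : R,
    ∑ k ∈ range (N + 1), (-z) ^ k * w ^ (N - k) * q ^ (k.choose 2) * (u k * u (N - k)) =
    u N * ∏ i ∈ range N, (w - z * q ^ i) := by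
  have us := u_succ hu
  have h0 : u 0 = 1 := by simpa [P] using hu 0
  induction N with
  | zero => intro a; simp [h0]
  | succ N ih =>
    intro z
    apply u_cancel hu N
    have key : (1 - q ^ (N + 1)) * ∑ k ∈ range (N + 1 + 1),
        (-z) ^ k * w ^ (N + 1 - k) * q ^ (k.choose 2) * (u k * u (N + 1 - k))
        = ∑ k ∈ range (N + 1 + 1), (-z) ^ k * w ^ (N + 1 - k) * q ^ (k.choose 2) * q ^ k *
            (u k * ((1 - q ^ (N + 1 - k)) * u (N + 1 - k)))
        + ∑ k ∈ range (N + 1 + 1), (-z) ^ k * w ^ (N + 1 - k) * q ^ (k.choose 2) *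
            (((1 - q ^ k) * u k) * u (N + 1 - k)) := by
      rw [mul_sum, ← sum_add_distrib]
      refine sum_congr rfl fun k hk => ?_
      have : q ^ (N + 1) = q ^ (N + 1 - k) * q ^ k := by
        rw [← pow_add]; congr 1; have := mem_range.1 hk; omega
      rw [this]; ring
    rw [key, sum_range_succ, sum_range_succ' _ (N + 1)]
    simp only [Nat.sub_self, pow_zero, sub_self, zero_mul, mul_zero, add_zero]
    have e1 : ∑ k ∈ range (N + 1), (-z) ^ k * w ^ (N + 1 - k) * q ^ (k.choose 2) * q ^ k *
            (u k * ((1 - q ^ (N + 1 - k)) * u (N + 1 - k)))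
            = w * (u N * ∏ i ∈ range N, (w - (z * q) * q ^ i)) := by
      rw [← ih (z * q), mul_sum]
      refine sum_congr rfl fun k hk => ?_
      have : N + 1 - k = (N - k) + 1 := by have := mem_range.1 hk; omega
      rw [this, us, ← neg_mul, mul_pow]
      ring
    have e2 : ∑ k ∈ range (N + 1), (-z) ^ (k + 1) * w ^ (N + 1 - (k + 1)) *
            q ^ ((k + 1).choose 2) * (((1 - q ^ (k + 1)) * u (k + 1)) * u (N + 1 - (k + 1)))
            = - z * (u N * ∏ i ∈ range N, (w - (z * q) * q ^ i)) := by
      rw [← ih (z * q), mul_sum]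
      refine sum_congr rfl fun k hk => ?_
      rw [us, Nat.add_sub_add_right, ← neg_mul z q, mul_pow, Nat.choose_succ_succ' k 1,
        Nat.choose_one_right]
      ring
    rw [e1, e2, prod_range_succ']
    have e3 : ∏ i ∈ range N, (w - (z * q) * q ^ i) = ∏ i ∈ range N, (w - z * q ^ (i + 1)) :=
      prod_congr rfl fun i _ => by ring
    rw [e3]
    linear_combination (- (∏ i ∈ range N, (w - z * q ^ (i + 1))) * (w - z)) * us N

theorem fold (g : ℕ → R) (n : ℕ) : ∑ k ∈ range (2 * n + 1), g k =
    ∑ m ∈ range (n + 1), if m = 0 then g n else g (n + m) + g (n - m) := by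
  rw [sum_range_succ' _ n]
  simp only [Nat.add_eq_zero_iff, one_ne_zero, and_false, if_false, if_true]
  rw [sum_add_distrib, show 2 * n + 1 = n + 1 + n by ring, sum_range_add, sum_range_succ,
    ← sum_range_reflect]
  have h1 : ∑ j ∈ range n, g (n - 1 - j) = ∑ j ∈ range n, g (n - (j + 1)) :=
    sum_congr rfl fun j _ => by congr 1; omega
  have h2 : ∑ j ∈ range n, g (n + 1 + j) = ∑ j ∈ range n, g (n + (j + 1)) :=
    sum_congr rfl fun j _ => by congr 1; omega
  rw [h1, h2]; ring

def al (x : R) (d e m : ℕ) : R := if m = 0 then 1 else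
  (-1) ^ m * (x ^ (d * m + (d + e) * m.choose 2) + x ^ (e * m + (d + e) * m.choose 2))

theorem ch2 (m : ℕ) : (m : ℤ) * m = 2 * (m.choose 2 : ℕ) + m := by
  induction m with
  | zero => simp
  | succ m ih => rw [Nat.choose_succ_succ' m 1, Nat.choose_one_right]; push_cast; linarith

theorem chadd (m t : ℕ) : (m + t).choose 2 = m.choose 2 + t.choose 2 + m * t := by
  have h1 := ch2 m
  have h2 := ch2 t
  have h3 := ch2 (m + t)
  have : (((m + t).choose 2 : ℕ) : ℤ) = m.choose 2 + t.choose 2 + m * t := by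
    push_cast at h3; linarith
  exact_mod_cast this

theorem sumid (d c n : ℕ) : ∑ i ∈ range n, (d + c * i) = d * n + c * n.choose 2 := by
  induction n with
  | zero => simp
  | succ n ih => rw [sum_range_succ, ih, Nat.choose_succ_succ' n 1, Nat.choose_one_right]; ring

theorem jtp [IsDomain R] {x : R} (hx : x ≠ 0) (d e : ℕ) {u : ℕ → R}
    (hu : ∀ k, P (x ^ (d + e)) k * u k = 1) (n : ℕ) :
    ∑ m ∈ range (n + 1), al x d e m * (u (n - m) * u (n + m)) =
    u (2 * n) * ∏ i ∈ range n, ((1 - x ^ ((d + e) * i + d)) * (1 - x ^ ((d + e) * i + e))) := by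
  set E := d * n + (d + e) * n ^ 2 + (d + e) * n.choose 2 with hE
  have hc : (-1) ^ n * x ^ E ≠ 0 := mul_ne_zero (pow_ne_zero _ (by simp)) (pow_ne_zero _ hx)
  apply mul_left_cancel₀ hc
  have h := qbinom hu (x ^ ((d + e) * n)) (2 * n) (x ^ d)
  have hprod : ∏ i ∈ range (2 * n), (x ^ ((d + e) * n) - x ^ d * (x ^ (d + e)) ^ i) =
      (-1) ^ n * x ^ E *
      ∏ i ∈ range n, ((1 - x ^ ((d + e) * i + d)) * (1 - x ^ ((d + e) * i + e))) := by
    rw [two_mul n, prod_range_add, ← prod_range_reflect]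
    have h1 : ∀ j ∈ range n, x ^ ((d + e) * n) - x ^ d * (x ^ (d + e)) ^ (n - 1 - j)
        = (-1) * x ^ (d + (d + e) * (n - 1 - j)) * (1 - x ^ ((d + e) * j + e)) := by
      intro j hj
      obtain ⟨t, rfl⟩ : ∃ t, n = j + 1 + t := ⟨n - (j + 1), by have := mem_range.1 hj; omega⟩
      rw [show j + 1 + t - 1 - j = t by omega]
      ring
    have h2 : ∀ j ∈ range n, x ^ ((d + e) * n) - x ^ d * (x ^ (d + e)) ^ (n + j)
        = x ^ ((d + e) * n) * (1 - x ^ ((d + e) * j + d)) := by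
      intro j hj
      ring
    rw [prod_congr rfl h1, prod_congr rfl h2]
    simp only [prod_mul_distrib, prod_const, card_range]
    rw [prod_range_reflect (fun i => x ^ (d + (d + e) * i)), prod_pow_eq_pow_sum, sumid, hE]
    ring
  rw [hprod, fold] at h
  rw [mul_left_comm, ← h, mul_sum]
  refine sum_congr rfl fun m hm => ?_
  obtain ⟨t, rfl⟩ : ∃ t, n = m + t := ⟨n - m, by have := mem_range.1 hm; omega⟩
  have hC := chadd m t
  have key (f g k : ℕ) : (-x ^ d) ^ k * (x ^ ((d + e) * (m + t))) ^ f * (x ^ (d + e)) ^ g =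
      (-1) ^ k * x ^ (d * k + (d + e) * (m + t) * f + (d + e) * g) := by
    rw [neg_pow]; ring
  have hm2 := ch2 m
  have hs : ((-1 : R) ^ m) * (-1) ^ m = 1 := by rw [← mul_pow]; simp
  unfold al
  split_ifs with h0
  · subst h0
    rw [key, hE]
    simp only [zero_add, Nat.sub_zero, Nat.add_zero]
    rw [show 2 * t - t = t by omega]
    ring
  · rw [key, key, show 2 * (m + t) - (m + t + m) = t by omega, show m + t - m = t by omega,
      show 2 * (m + t) - t = m + t + m by omega, hE]
    have a1 : d * (m + t + m) + (d + e) * (m + t) * t + (d + e) * (m + t + m).choose 2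
        = d * (m + t) + (d + e) * (m + t) ^ 2 + (d + e) * (m + t).choose 2 +
          (d * m + (d + e) * m.choose 2) := by
      rw [chadd (m + t) m]; ring
    have a2 : d * t + (d + e) * (m + t) * (m + t + m) + (d + e) * t.choose 2
        = d * (m + t) + (d + e) * (m + t) ^ 2 + (d + e) * (m + t).choose 2 +
          (e * m + (d + e) * m.choose 2) := by
      rw [hC]
      zify
      linear_combination ((d : ℤ) + e) * hm2
    have s2 : (-1 : R) ^ t = (-1) ^ (m + t) * (-1) ^ m := by
      rw [pow_add]; linear_combination (-(-1) ^ t) * hs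
    rw [a1, a2, s2, pow_add (-1 : R) (m + t) m]
    ring

end Gen

open PowerSeries

noncomputable def G (Q : Multiset ℕ → Prop) : ℚ⟦X⟧ :=
  PowerSeries.mk fun n => (Nat.card {p : n.Partition // Q p.parts} : ℚ)

theorem G_congr {Q Q' : Multiset ℕ → Prop} (h : ∀ s, 0 ∉ s → (Q s ↔ Q' s)) : G Q = G Q' := by
  ext n
  simp only [G, coeff_mk]
  congr 1
  exact Nat.card_congr (Equiv.subtypeEquivRight fun p =>
    h _ fun h0 => (p.parts_pos h0).ne' rfl)

theorem G_split (Q : Multiset ℕ → Prop) (a : ℕ) (ha : 0 < a) :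
    G Q = G (fun s => Q s ∧ a ∉ s) + X ^ a * G (fun s => Q (a ::ₘ s)) := by
  classical
  ext n
  rw [map_add, coeff_X_pow_mul']
  simp only [G, coeff_mk]
  have h1 : Nat.card {p : n.Partition // Q p.parts} =
      Nat.card {p : n.Partition // Q p.parts ∧ a ∉ p.parts} +
      Nat.card {p : n.Partition // Q p.parts ∧ a ∈ p.parts} := by
    simp only [Nat.card_eq_fintype_card, Fintype.card_subtype]
    rw [← card_filter_add_card_filter_not (s := univ.filter fun p : n.Partition => Q p.parts)
      (fun p => a ∉ p.parts), filter_filter, filter_filter]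
    simp
  rw [h1]
  push_cast
  congr 1
  split_ifs with h
  · congr 1
    refine Nat.card_congr ⟨fun p => ⟨⟨p.1.parts.erase a, ?_, ?_⟩, ?_⟩,
      fun p => ⟨⟨a ::ₘ p.1.parts, ?_, ?_⟩, ?_, ?_⟩, ?_, ?_⟩
    · intro i hi; exact p.1.parts_pos (Multiset.mem_of_mem_erase hi)
    · have h2 := Multiset.sum_erase p.2.2
      have h3 := p.1.parts_sum
      omega
    · show Q (a ::ₘ (p.1.parts.erase a))
      rw [Multiset.cons_erase p.2.2]; exact p.2.1
    · intro i hi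
      rcases Multiset.mem_cons.1 hi with rfl | hi
      · exact ha
      · exact p.1.parts_pos hi
    · rw [Multiset.sum_cons, p.1.parts_sum]; omega
    · exact p.2
    · exact Multiset.mem_cons_self _ _
    · intro p
      apply Subtype.ext; apply Nat.Partition.ext
      exact Multiset.cons_erase p.2.2
    · intro p
      apply Subtype.ext; apply Nat.Partition.ext
      exact Multiset.erase_cons_head _ _
  · have : IsEmpty {p : n.Partition // Q p.parts ∧ a ∈ p.parts} :=
      ⟨fun p => h (Nat.Partition.le_of_mem_parts p.2.2)⟩
    simp

theorem G_one (Q : Multiset ℕ → Prop) (k : ℕ) (h0 : Q 0) (h : ∀ s, Q s → ∀ i ∈ s, k ≤ i) :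
    X ^ k ∣ G Q - 1 := by
  rw [X_pow_dvd_iff]
  intro m hm
  rw [map_sub, coeff_one]
  simp only [G, coeff_mk]
  split_ifs with hm0
  · subst hm0
    have : Unique {p : Nat.Partition 0 // Q p.parts} :=
      ⟨⟨⟨default, by simpa using h0⟩⟩, fun p => Subtype.ext (Subsingleton.elim _ _)⟩
    rw [Nat.card_unique]; simp
  · have : IsEmpty {p : m.Partition // Q p.parts} := by
      refine ⟨fun p => ?_⟩
      rcases Multiset.empty_or_exists_mem p.1.parts with h1 | ⟨i, hi⟩
      · have := p.1.parts_sum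
        rw [h1] at this
        exact hm0 (by simpa using this.symm)
      · have := Nat.Partition.le_of_mem_parts hi
        have := h _ p.2 i hi
        omega
    simp

def Qa (K : ℕ) (s : Multiset ℕ) : Prop := ∀ i ∈ s, K < i ∧ (i % 5 = 1 ∨ i % 5 = 4)
def Qb (k : ℕ) (s : Multiset ℕ) : Prop :=
  (∀ i ∈ s, k < i) ∧ ∀ a, s.count a + s.count (a + 1) ≤ 1

theorem Qa_yes (K : ℕ) (h : (K + 1) % 5 = 1 ∨ (K + 1) % 5 = 4) :
    (1 - X ^ (K + 1)) * G (Qa K) = G (Qa (K + 1)) := by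
  have h1 := G_split (Qa K) (K + 1) (by omega)
  have h2 : G (fun s => Qa K s ∧ K + 1 ∉ s) = G (Qa (K + 1)) := by
    apply G_congr
    intro s _
    constructor
    · rintro ⟨h1, h2⟩ i hi
      refine ⟨?_, (h1 i hi).2⟩
      have := (h1 i hi).1
      have : i ≠ K + 1 := by rintro rfl; exact h2 hi
      omega
    · intro h1
      refine ⟨fun i hi => ⟨by have := (h1 i hi).1; omega, (h1 i hi).2⟩, fun h2 => ?_⟩
      have := (h1 _ h2).1
      omega
  have h3 : G (fun s => Qa K ((K + 1) ::ₘ s)) = G (Qa K) := by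
    apply G_congr
    intro s _
    simp only [Qa, Multiset.mem_cons, forall_eq_or_imp]
    constructor
    · exact fun h => h.2
    · exact fun h' => ⟨⟨by omega, h⟩, h'⟩
  rw [h2, h3] at h1
  linear_combination h1

theorem Qa_no (K : ℕ) (h : ¬ ((K + 1) % 5 = 1 ∨ (K + 1) % 5 = 4)) :
    G (Qa K) = G (Qa (K + 1)) := by
  apply G_congr
  intro s _
  constructor
  · intro h1 i hi
    have := h1 i hi
    refine ⟨?_, this.2⟩
    have : i ≠ K + 1 := by rintro rfl; exact h this.2
    omega
  · exact fun h1 i hi => ⟨by have := (h1 i hi).1; omega, (h1 i hi).2⟩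

theorem Qa_prod (n : ℕ) :
    (∏ i ∈ range n, ((1 - X ^ (5 * i + 1)) * (1 - X ^ (5 * i + 4)))) * G (Qa 0) =
      G (Qa (5 * n)) := by
  induction n with
  | zero => simp
  | succ n ih =>
    have h1 := Qa_yes (5 * n) (by omega)
    rw [Qa_no (5 * n + 1) (by omega), Qa_no (5 * n + 2) (by omega)] at h1
    have h2 := Qa_yes (5 * n + 3) (by omega)
    rw [Qa_no (5 * n + 4) (by omega)] at h2
    rw [prod_range_succ, show 5 * (n + 1) = 5 * n + 4 + 1 by ring, ← h2, ← h1, ← ih]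
    ring

theorem Qb_rec (k : ℕ) : G (Qb k) = G (Qb (k + 1)) + X ^ (k + 1) * G (Qb (k + 2)) := by
  rw [G_split (Qb k) (k + 1) (by omega)]
  congr 1
  · apply G_congr
    intro s _
    constructor
    · rintro ⟨⟨h1, h2⟩, h3⟩
      refine ⟨fun i hi => ?_, h2⟩
      have := h1 i hi
      have : i ≠ k + 1 := by rintro rfl; exact h3 hi
      omega
    · rintro ⟨h1, h2⟩
      exact ⟨⟨fun i hi => by have := h1 i hi; omega, h2⟩, fun h => by have := h1 _ h; omega⟩
  · congr 1
    apply G_congr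
    intro s _
    constructor
    · rintro ⟨h1, h2⟩
      have h3 : ∀ a, s.count a ≤ ((k + 1) ::ₘ s).count a := fun a =>
        Multiset.count_le_of_le a (Multiset.le_cons_self _ _)
      refine ⟨fun i hi => ?_, fun a => ?_⟩
      · have h4 := h1 i (Multiset.mem_cons_of_mem hi)
        have h5 := Multiset.count_pos.2 hi
        have h6 := h2 (k + 1)
        rw [Multiset.count_cons_self] at h6
        have h7 := h3 (k + 1 + 1)
        by_contra hc
        obtain rfl | rfl : i = k + 1 ∨ i = k + 1 + 1 := by omega
        · omega
        · omega
      · have := h2 a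
        have := h3 a
        have := h3 (a + 1)
        omega
    · rintro ⟨h1, h2⟩
      have h3 : ∀ a, a ≤ k + 2 → s.count a = 0 := fun a ha =>
        Multiset.count_eq_zero.2 fun h => by have := h1 a h; omega
      refine ⟨fun i hi => ?_, fun a => ?_⟩
      · rcases Multiset.mem_cons.1 hi with rfl | hi
        · omega
        · have := h1 i hi; omega
      · rw [Multiset.count_cons, Multiset.count_cons]
        have := h2 a
        have := h3 a
        have := h3 (a + 1)
        split_ifs <;> omega


noncomputable def u (x : ℚ⟦X⟧) (n : ℕ) : ℚ⟦X⟧ := (P x n)⁻¹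

theorem Pu (c : ℕ) (hc : 0 < c) (k : ℕ) : P (X ^ c : ℚ⟦X⟧) k * u (X ^ c) k = 1 := by
  apply PowerSeries.mul_inv_cancel
  simp [P, map_prod, hc.ne']

theorem Pcong (c : ℕ) (hc : 0 < c) (n k : ℕ) :
    X ^ (n + 1) ∣ P (X ^ c : ℚ⟦X⟧) (n + k) - P (X ^ c) n := by
  induction k with
  | zero => simp
  | succ k ih =>
    rw [← add_assoc, P_succ, mul_sub, mul_one, sub_right_comm]
    refine dvd_sub ih (Dvd.dvd.mul_left ?_ _)
    rw [← pow_mul]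
    apply pow_dvd_pow
    nlinarith

theorem ucong (c : ℕ) (hc : 0 < c) (n k : ℕ) :
    X ^ (n + 1) ∣ u (X ^ c : ℚ⟦X⟧) (n + k) - u (X ^ c) n := by
  obtain ⟨t, ht⟩ := Pcong c hc n k
  have h1 := Pu c hc n
  have h2 := Pu c hc (n + k)
  refine ⟨- u (X ^ c) n * u (X ^ c) (n + k) * t, ?_⟩
  linear_combination (-u (X ^ c) n * u (X ^ c) (n + k)) * ht - (u (X ^ c) (n + k)) * h1 +
    (u (X ^ c) n) * h2

theorem al_dvd (m : ℕ) : X ^ m ∣ al (X : ℚ⟦X⟧) 2 3 m := by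
  unfold al
  split_ifs with h
  · simp [h]
  · refine Dvd.dvd.mul_left (dvd_add ?_ ?_) _ <;> apply pow_dvd_pow <;> nlinarith

theorem scong (c : ℕ) (hc : 0 < c) (n : ℕ) : X ^ (n + 1) ∣
    ∑ m ∈ range (n + 1), al X 2 3 m * (u (X ^ c) (n - m) * u (X ^ c) (n + m)) -
    (∑ m ∈ range (n + 1), al (X : ℚ⟦X⟧) 2 3 m) * (u (X ^ c) n * u (X ^ c) n) := by
  rw [sum_mul, ← sum_sub_distrib]
  refine dvd_sum fun m hm => ?_
  obtain ⟨t, rfl⟩ : ∃ t, n = m + t := ⟨n - m, by have := mem_range.1 hm; omega⟩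
  rw [← mul_sub, add_assoc, pow_add]
  refine mul_dvd_mul (al_dvd m) ?_
  rw [show m + t - m = t by omega]
  obtain ⟨a, ha⟩ := ucong c hc t m
  obtain ⟨b, hb⟩ := ucong c hc t (m + m)
  rw [show m + t + m = t + (m + m) by ring, add_comm m t]
  refine ⟨u (X ^ c) t * b - (u (X ^ c) (t + m) + u (X ^ c) t) * a, ?_⟩
  linear_combination (u (X ^ c) t) * hb - (u (X ^ c) (t + m) + u (X ^ c) t) * ha

noncomputable def H (L k : ℕ) : ℚ⟦X⟧ := ∑ r ∈ range (L + 1), X ^ (r ^ 2 + k * r) * u (X ^ 1) r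

theorem unitB (n : ℕ) :
    ∑ m ∈ range (n + 1), al (X : ℚ⟦X⟧) 0 1 m * (u (X ^ 1) (n - m) * u (X ^ 1) (n + m)) =
      if n = 0 then 1 else 0 := by
  rw [jtp X_ne_zero 0 1 (fun k => Pu 1 one_pos k)]
  split_ifs with h
  · subst h; simp [u, P]
  · rw [prod_eq_zero (i := 0) (mem_range.2 (by omega))]
    · simp
    · simp

theorem al_shift (m : ℕ) : al (X : ℚ⟦X⟧) 0 1 m * (X ^ 1) ^ (m ^ 2) * (X ^ 1) ^ (m ^ 2) =
    al X 2 3 m := by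
  have h : m ^ 2 = 2 * m.choose 2 + m := by
    have := ch2 m
    rw [← pow_two] at this
    exact_mod_cast this
  unfold al
  split_ifs with h0
  · subst h0; simp
  · rw [h]; ring

theorem idA (n : ℕ) :
    ∑ m ∈ range (n + 1), al (X : ℚ⟦X⟧) 2 3 m * (u (X ^ 1) (n - m) * u (X ^ 1) (n + m)) =
    ∑ r ∈ range (n + 1), X ^ (r ^ 2) * u (X ^ 1) (n - r) * u (X ^ 1) r := by
  have hu := fun k => Pu 1 one_pos k
  have h1 := fun n => bailey hu (al X 0 1) n
  have h2 := bailey hu (fun m => al X 0 1 m * (X ^ 1) ^ (m ^ 2)) n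
  simp only [al_shift] at h2
  rw [h2]
  refine sum_congr rfl fun r _ => ?_
  rw [h1 r]
  simp_rw [unitB]
  rw [sum_eq_single 0]
  · simp
  · intro b _ hb; simp [hb]
  · simp

theorem congA (n : ℕ) : X ^ (n + 1) ∣
    (∑ m ∈ range (n + 1), al (X : ℚ⟦X⟧) 2 3 m) * u (X ^ 1) n - H n 0 := by
  have h1 := scong 1 one_pos n
  rw [idA] at h1
  have h2 : X ^ (n + 1) ∣ ∑ r ∈ range (n + 1), X ^ (r ^ 2) * u (X ^ 1) (n - r) * u (X ^ 1) r -
      u (X ^ 1) n * H n 0 := by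
    rw [H, mul_sum, ← sum_sub_distrib]
    refine dvd_sum fun r hr => ?_
    obtain ⟨t, rfl⟩ : ∃ t, n = r + t := ⟨n - r, by have := mem_range.1 hr; omega⟩
    obtain ⟨a, ha⟩ := ucong 1 one_pos t r
    rw [show r + t - r = t by omega, add_comm r t]
    have h3 : (X : ℚ⟦X⟧) ^ (t + r + 1) ∣ X ^ (r ^ 2) * X ^ (t + 1) := by
      rw [← pow_add]; apply pow_dvd_pow; nlinarith [Nat.le_self_pow two_ne_zero r]
    refine h3.trans ⟨- a * u (X ^ 1) r, ?_⟩
    simp only [zero_mul, add_zero]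
    linear_combination (- X ^ (r ^ 2) * u (X ^ 1) r) * ha
  have h3 := dvd_sub h2 h1
  have h4 := Pu 1 one_pos n
  refine (Dvd.dvd.mul_left h3 (P (X ^ 1) n)).trans (dvd_of_eq ?_)
  linear_combination ((∑ m ∈ range (n + 1), al (X : ℚ⟦X⟧) 2 3 m) * u (X ^ 1) n - H n 0) * h4

noncomputable def Pi23 (n : ℕ) : ℚ⟦X⟧ :=
  ∏ i ∈ range n, ((1 - X ^ (5 * i + 2)) * (1 - X ^ (5 * i + 3)))
noncomputable def Pi14 (n : ℕ) : ℚ⟦X⟧ :=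
  ∏ i ∈ range n, ((1 - X ^ (5 * i + 1)) * (1 - X ^ (5 * i + 4)))

theorem congB (n : ℕ) : X ^ (n + 1) ∣
    (∑ m ∈ range (n + 1), al (X : ℚ⟦X⟧) 2 3 m) - P (X ^ 5) n * Pi23 n := by
  have h1 := scong 5 (by norm_num) n
  have hu := fun k => Pu 5 (by norm_num) k
  rw [jtp X_ne_zero 2 3 hu] at h1
  change _ ∣ u (X ^ 5) (2 * n) * Pi23 n - _ at h1
  have h2 := ucong 5 (by norm_num) n n
  rw [← two_mul] at h2
  have h4 := hu n
  have h3 := dvd_sub (Dvd.dvd.mul_left h2 (Pi23 n)) h1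
  refine (Dvd.dvd.mul_left h3 (P (X ^ 5) n * P (X ^ 5) n)).trans (dvd_of_eq ?_)
  generalize (∑ m ∈ range (n + 1), al (X : ℚ⟦X⟧) 2 3 m) = S at *
  linear_combination (S * (P (X ^ 5) n * u (X ^ 5) n + 1) - P (X ^ 5) n * Pi23 n) * h4

theorem P5n (n : ℕ) : P (X ^ 1 : ℚ⟦X⟧) (5 * n) = P (X ^ 5) n * Pi23 n * Pi14 n := by
  induction n with
  | zero => simp [P, Pi23, Pi14]
  | succ n ih =>
    rw [show 5 * (n + 1) = 5 * n + 1 + 1 + 1 + 1 + 1 by ring]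
    simp only [P_succ, ih]
    have h1 : Pi23 (n + 1) = Pi23 n * ((1 - X ^ (5 * n + 2)) * (1 - X ^ (5 * n + 3))) :=
      prod_range_succ _ _
    have h2 : Pi14 (n + 1) = Pi14 n * ((1 - X ^ (5 * n + 1)) * (1 - X ^ (5 * n + 4))) :=
      prod_range_succ _ _
    rw [h1, h2]
    ring

theorem congC (n : ℕ) : X ^ (n + 1) ∣ H n 0 * Pi14 n - 1 := by
  have hA := congA n
  have hB := congB n
  have h4 := Pu 1 one_pos n
  have hP := Pcong 1 one_pos n (4 * n)
  rw [show n + 4 * n = 5 * n by ring, P5n] at hP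
  have := dvd_add (dvd_sub (Dvd.dvd.mul_left hB (u (X ^ 1) n * Pi14 n))
    (Dvd.dvd.mul_left hA (Pi14 n))) (Dvd.dvd.mul_left hP (u (X ^ 1) n))
  refine this.trans (dvd_of_eq ?_)
  linear_combination -h4

theorem H_rec (L k : ℕ) :
    X ^ L ∣ H L k - (H L (k + 1) + X ^ (k + 1) * H L (k + 2)) := by
  have hu := fun k => Pu 1 one_pos k
  have us := u_succ hu
  have h1 : H L k - H L (k + 1) =
      ∑ r ∈ range L, X ^ (k + 1) * (X ^ (r ^ 2 + (k + 2) * r) * u (X ^ 1) r) := by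
    rw [H, H, ← sum_sub_distrib, sum_range_succ']
    simp only [mul_zero, sub_self, add_zero]
    refine sum_congr rfl fun r _ => ?_
    rw [← us r]
    ring
  rw [← sub_sub, h1, H, mul_sum, sum_range_succ, ← sub_sub, sub_self, zero_sub, dvd_neg]
  refine Dvd.dvd.mul_left (Dvd.dvd.mul_right (pow_dvd_pow _ ?_) _) _
  nlinarith [Nat.le_self_pow two_ne_zero L]

theorem H_one (L k : ℕ) : X ^ k ∣ H L k - 1 := by
  rw [H, sum_range_succ']
  have : u (X ^ 1 : ℚ⟦X⟧) 0 = 1 := by simp [u, P]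
  simp only [this]
  simp only [ne_eq, OfNat.ofNat_ne_zero, not_false_eq_true, zero_pow, mul_zero, add_zero, pow_zero,
    mul_one, add_sub_cancel_right]
  refine dvd_sum fun r _ => Dvd.dvd.mul_right (pow_dvd_pow _ ?_) _
  nlinarith [Nat.zero_le (k * r)]

theorem GH (N d : ℕ) : ∀ k, N ≤ k + d → X ^ N ∣ G (Qb k) - H N k := by
  induction d with
  | zero =>
    intro k hk
    have h1 := G_one (Qb k) k ⟨by simp, by simp⟩ (fun s hs i hi => (hs.1 i hi).le)
    have h2 := dvd_sub h1 (H_one N k)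
    rw [sub_sub_sub_cancel_right] at h2
    exact (pow_dvd_pow _ (by omega)).trans h2
  | succ d ih =>
    intro k hk
    have h1 := ih (k + 1) (by omega)
    have h2 := ih (k + 2) (by omega)
    have h3 := H_rec N k
    have := dvd_sub (dvd_add h1 (Dvd.dvd.mul_left h2 (X ^ (k + 1)))) h3
    refine this.trans (dvd_of_eq ?_)
    rw [Qb_rec k]
    ring

theorem H_stab (n : ℕ) : X ^ (n + 1) ∣ H (n + 1) 0 - H n 0 := by
  rw [H, H, sum_range_succ _ (n + 1), add_sub_cancel_left]
  refine Dvd.dvd.mul_right (pow_dvd_pow _ ?_) _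
  nlinarith

theorem main (n : ℕ) : X ^ (n + 1) ∣ G (Qa 0) - G (Qb 0) := by
  have h1 := GH (n + 1) (n + 1) 0 (by omega)
  have h2 := H_stab n
  have h3 := congC n
  have h4 := G_one (Qa (5 * n)) (n + 1) (by simp [Qa])
    (fun s hs i hi => by have := (hs i hi).1; omega)
  rw [← Qa_prod] at h4
  change _ ∣ Pi14 n * G (Qa 0) - 1 at h4
  have := dvd_sub (dvd_sub (dvd_sub (Dvd.dvd.mul_left h4 (H n 0))
    (Dvd.dvd.mul_left h3 (G (Qa 0)))) h2) h1
  refine this.trans (dvd_of_eq ?_)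
  ring

end RR

/-- The number of partitions of `n` into parts congruent to `1` or `4` mod `5`
equals the number of partitions of `n` whose (non-increasing) parts satisfy
`λᵢ - λᵢ₊₁ ≥ 2`; the latter condition is equivalent to: for every `a`, at most one
part lies in `{a, a+1}`. -/
theorem stmt9 (n : ℕ) :
    Nat.card {p : n.Partition // ∀ i ∈ p.parts, i % 5 = 1 ∨ i % 5 = 4}
      = Nat.card {p : n.Partition //
          ∀ a : ℕ, p.parts.count a + p.parts.count (a + 1) ≤ 1} := by
  have h := PowerSeries.X_pow_dvd_iff.1 (RR.main n) n (by omega)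
  rw [map_sub, sub_eq_zero] at h
  simp only [RR.G, PowerSeries.coeff_mk, Nat.cast_inj] at h
  have e1 : Nat.card {p : n.Partition // ∀ i ∈ p.parts, i % 5 = 1 ∨ i % 5 = 4} =
      Nat.card {p : n.Partition // RR.Qa 0 p.parts} :=
    Nat.card_congr (Equiv.subtypeEquivRight fun p =>
      ⟨fun h i hi => ⟨p.parts_pos hi, h i hi⟩, fun h i hi => (h i hi).2⟩)
  have e2 : Nat.card {p : n.Partition //
          ∀ a : ℕ, p.parts.count a + p.parts.count (a + 1) ≤ 1} =
      Nat.card {p : n.Partition // RR.Qb 0 p.parts} :=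
    Nat.card_congr (Equiv.subtypeEquivRight fun p =>
      ⟨fun h => ⟨fun i hi => p.parts_pos hi, h⟩, fun h => h.2⟩)
  rw [e1, e2, h]
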